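/- Let (X,d,μ) be an η-Ahlfors regular quasi-metric measure space with η > 0 and triangular constant κ ≥ 1, let 0 < γ < 2η and set σ = (2η−γ)/(2η). Suppose p₁, p₂, p₃ satisfy 0 < 1/p₁ < 1, σ < 1/p₂ < 1, 2σ < 1/p₁ + 1/p₂ < 1 + σ and 1/p₃ = 1/p₁ + 1/p₂ − 2σ. Then there exists C > 0 such that ‖I_{η−γ/2}(f · I_{η−γ/2}g)‖_{L^{p₃}(μ)} ≤ C ‖f‖_{L^{p₁}(μ)} ‖g‖_{L^{p₂}(μ)} for every f ∈ L^{p₁}(X,μ) and g ∈ L^{p₂}(X,μ) nonnegative. -/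

import Mathlib

open MeasureTheory ENNReal

/-- The third order hypermetric induced by `d`:
`ρ(x,y,z) = inf_{u ∈ X} max {d(x,u), d(y,u), d(z,u)}`. -/
noncomputable def hyperRho {X : Type*} (d : X → X → ℝ) (x y z : X) : ℝ :=
  ⨅ u : X, max (d x u) (max (d y u) (d z u))

/-- `d` is a quasi-metric on `X` with triangular constant `κ`. -/
def IsQuasiMetric {X : Type*} (d : X → X → ℝ) (κ : ℝ) : Prop :=
  (∀ x y, 0 ≤ d x y) ∧ (∀ x y, (d x y = 0 ↔ x = y)) ∧ (∀ x y, d x y = d y x) ∧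
    (∀ x y z, d x z ≤ κ * (d x y + d y z))

/-- `(X,d,μ)` is `η`-Ahlfors regular with constants `a ≤ A`. -/
def IsAhlfors {X : Type*} [MeasurableSpace X] (d : X → X → ℝ) (μ : Measure X)
    (η a A : ℝ) : Prop :=
  ∀ x : X, ∀ r : ℝ, 0 < r →
    ENNReal.ofReal (a * r ^ η) ≤ μ {y | d x y < r} ∧
      μ {y | d x y < r} ≤ ENNReal.ofReal (A * r ^ η)

/-- The bilinear fractional integral operator
`T^γ(f,g)(x) = ∬ f(y) g(z) ρ(x,y,z)^{-γ} dμ(y) dμ(z)`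
(with the convention `0 ^ (-γ) = ∞` for `γ > 0`, as in `ENNReal.rpow`). -/
noncomputable def Tgamma {X : Type*} [MeasurableSpace X] (d : X → X → ℝ)
    (μ : Measure X) (γ : ℝ) (f g : X → ℝ≥0∞) (x : X) : ℝ≥0∞ :=
  ∫⁻ y, ∫⁻ z, f y * g z * (ENNReal.ofReal (hyperRho d x y z)) ^ (-γ) ∂μ ∂μ

/-- The linear fractional integral operator of order `β` in the `η`-dimensional
space `(X,d,μ)`: `I_β h(x) = ∫ h(y) d(x,y)^{β-η} dμ(y)`. -/
noncomputable def fracInt {X : Type*} [MeasurableSpace X] (d : X → X → ℝ)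
    (μ : Measure X) (β η : ℝ) (h : X → ℝ≥0∞) (x : X) : ℝ≥0∞ :=
  ∫⁻ y, h y * (ENNReal.ofReal (d x y)) ^ (β - η) ∂μ

/-- The `L^p(μ)` norm of a nonnegative function, `p` a real exponent. -/
noncomputable def lpNorm {X : Type*} [MeasurableSpace X] (μ : Measure X) (p : ℝ)
    (h : X → ℝ≥0∞) : ℝ≥0∞ :=
  (∫⁻ x, (h x) ^ p ∂μ) ^ (1 / p)

/-! Writing `1 / q = 1 / p₂ - β₂ / η` and `1 / r = 1 / p₁ + 1 / q`, Hölder's inequality reduces the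
bilinear bound to two applications of the Hardy-Littlewood-Sobolev inequality, `L^{p₂} → L^q` for
the inner operator and `L^r → L^{p₃}` for the outer one.

That inequality holds for every kernel `K` which is bounded in weak `L^r` in each variable,
uniformly in the other; for `K = d ^ (β - η)` the superlevel sets are balls and `r = η / (η - β)`.
After normalizing `‖f‖_p ≤ 1`, cut `K` at a height `s` and `f` at a height `t`. The part of `K`
below `s` is controlled by Hölder, the part of `f` below `t` by the weak bound in `y`, and the
remaining part in `L¹` by the weak bound in `x`. Choosing `s` so that these balance gives, for
`F = ∫ K f`,
`t μ {c F ^ (q / p) > t} ≤ ∫_{f > t} f`,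
which is the weak type inequality satisfied by a maximal function. The layer cake argument behind
Doob's maximal inequality turns it into the strong type bound. -/

section RealPowerIntegrals

open Set

lemma setLIntegral_Ioc_zero_rpow {a s : ℝ} (ha : -1 < a) (hs : 0 ≤ s) :
    ∫⁻ t in Ioc 0 s, ENNReal.ofReal (t ^ a) = ENNReal.ofReal (s ^ (a + 1) / (a + 1)) := by
  have hint : IntegrableOn (fun t : ℝ => t ^ a) (Ioc 0 s) :=
    (intervalIntegrable_iff_integrableOn_Ioc_of_le hs).1
      (intervalIntegral.intervalIntegrable_rpow' ha)
  rw [← ofReal_integral_eq_lintegral_ofReal hint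
      (ae_restrict_of_forall_mem measurableSet_Ioc fun t ht => Real.rpow_nonneg ht.1.le a),
    ← intervalIntegral.integral_of_le hs, integral_rpow (Or.inl ha),
    Real.zero_rpow (by linarith), sub_zero]

lemma setLIntegral_Ioi_rpow {a s : ℝ} (ha : a < -1) (hs : 0 < s) :
    ∫⁻ t in Ioi s, ENNReal.ofReal (t ^ a) = ENNReal.ofReal (-s ^ (a + 1) / (a + 1)) := by
  rw [← ofReal_integral_eq_lintegral_ofReal (integrableOn_Ioi_rpow_of_lt ha hs)
      (ae_restrict_of_forall_mem measurableSet_Ioi fun t ht =>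
        Real.rpow_nonneg (hs.le.trans (mem_Ioi.1 ht).le) a),
    integral_Ioi_rpow_of_lt ha hs]

lemma setLIntegral_Ioi_zero_rpow (a : ℝ) :
    ∫⁻ t in Ioi 0, ENNReal.ofReal (t ^ a) = ∞ := by
  by_contra h
  refine not_integrableOn_Ioi_rpow a
    ((lintegral_ofReal_ne_top_iff_integrable (by fun_prop) ?_).1 h)
  exact ae_restrict_of_forall_mem measurableSet_Ioi fun t ht => Real.rpow_nonneg (le_of_lt ht) a

lemma setLIntegral_Ioi_zero_eq_add {s : ℝ} (hs : 0 ≤ s) (φ : ℝ → ℝ≥0∞) :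
    ∫⁻ t in Ioi 0, φ t = (∫⁻ t in Ioc 0 s, φ t) + ∫⁻ t in Ioi s, φ t := by
  rw [← Ioc_union_Ioi_eq_Ioi hs, lintegral_union measurableSet_Ioi Ioc_disjoint_Ioi_same]

end RealPowerIntegrals

section LayerCake

open Set

variable {X : Type*} [MeasurableSpace X] {μ : Measure X} {k : X → ℝ≥0∞} {p : ℝ}

lemma lintegral_rpow_eq_lintegral_meas_ofReal_lt (hk : AEMeasurable k μ) (hp : 0 < p) :
    ∫⁻ x, k x ^ p ∂μ = ENNReal.ofReal p *
      ∫⁻ t in Ioi (0 : ℝ), μ {x | ENNReal.ofReal t < k x} * ENNReal.ofReal (t ^ (p - 1)) := by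
  by_cases htop : μ {x | k x = ∞} = 0
  · have hfin : ∀ᵐ x ∂μ, k x ≠ ∞ := by simpa only [ae_iff, not_not] using htop
    calc ∫⁻ x, k x ^ p ∂μ = ∫⁻ x, ENNReal.ofReal ((k x).toReal ^ p) ∂μ := by
          refine lintegral_congr_ae (hfin.mono fun x hx => ?_)
          simp only [← ENNReal.ofReal_rpow_of_nonneg ENNReal.toReal_nonneg hp.le,
            ENNReal.ofReal_toReal hx]
      _ = _ := lintegral_rpow_eq_lintegral_meas_lt_mul μ
          (Filter.Eventually.of_forall fun x => ENNReal.toReal_nonneg) hk.ennreal_toReal hp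
      _ = _ := by
          congr 1
          refine setLIntegral_congr_fun measurableSet_Ioi fun t ht => ?_
          congr 1
          refine measure_congr (hfin.mono fun x hx => propext ?_)
          exact (ENNReal.ofReal_lt_iff_lt_toReal (le_of_lt ht) hx).symm
  · have hright : ∫⁻ t in Ioi (0 : ℝ),
        μ {x | ENNReal.ofReal t < k x} * ENNReal.ofReal (t ^ (p - 1)) = ∞ := by
      refine top_le_iff.1 ?_
      calc ∞ = μ {x | k x = ∞} * ∫⁻ t in Ioi (0 : ℝ), ENNReal.ofReal (t ^ (p - 1)) := by
            rw [setLIntegral_Ioi_zero_rpow, ENNReal.mul_top htop]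
        _ = ∫⁻ t in Ioi (0 : ℝ), μ {x | k x = ∞} * ENNReal.ofReal (t ^ (p - 1)) :=
            (lintegral_const_mul _ (by fun_prop)).symm
        _ ≤ _ := by
            refine lintegral_mono fun t => mul_le_mul_left (measure_mono fun x hx => ?_) _
            exact (ENNReal.ofReal_lt_top).trans_eq (Eq.symm hx)
    rw [hright, ENNReal.mul_top (ENNReal.ofReal_pos.2 hp).ne']
    refine lintegral_eq_top_of_measure_eq_top_ne_zero (hk.pow_const p) ?_
    simpa only [ENNReal.rpow_eq_top_iff_of_pos hp] using htop

lemma lintegral_eq_lintegral_meas_ofReal_lt (hk : AEMeasurable k μ) :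
    ∫⁻ x, k x ∂μ = ∫⁻ t in Ioi (0 : ℝ), μ {x | ENNReal.ofReal t < k x} := by
  simpa using lintegral_rpow_eq_lintegral_meas_ofReal_lt hk one_pos

/- As in the proof of Doob's and of the Hardy-Littlewood maximal inequality, except that `G` and `f`
may live on different spaces. The layer cake formula is applied to `G` with exponent `p` and to `f`,
with respect to the measure `f ν`, with exponent `p - 1`. -/
lemma lintegral_rpow_le_of_mul_meas_lt_le {Y : Type*} [MeasurableSpace Y] {ν : Measure Y}
    {G : X → ℝ≥0∞} {f : Y → ℝ≥0∞} (hG : AEMeasurable G μ) (hf : Measurable f) (hp : 1 < p)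
    (h : ∀ t : ℝ, 0 < t → ENNReal.ofReal t * μ {x | ENNReal.ofReal t < G x} ≤
      ∫⁻ y in {y | ENNReal.ofReal t < f y}, f y ∂ν) :
    ∫⁻ x, G x ^ p ∂μ ≤ ENNReal.ofReal (p / (p - 1)) * ∫⁻ y, f y ^ p ∂ν := by
  have hp1 : 0 < p - 1 := sub_pos.2 hp
  have hpow (t : ℝ) (ht : 0 < t) :
      ENNReal.ofReal (t ^ (p - 1)) = ENNReal.ofReal t * ENNReal.ofReal (t ^ (p - 1 - 1)) := by
    rw [← ENNReal.ofReal_mul ht.le, Real.rpow_sub_one ht.ne' (p - 1), mul_div_cancel₀ _ ht.ne']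
  calc ∫⁻ x, G x ^ p ∂μ
      = ENNReal.ofReal p * ∫⁻ t in Ioi (0 : ℝ),
          μ {x | ENNReal.ofReal t < G x} * ENNReal.ofReal (t ^ (p - 1)) :=
        lintegral_rpow_eq_lintegral_meas_ofReal_lt hG (zero_lt_one.trans hp)
    _ ≤ ENNReal.ofReal p * ∫⁻ t in Ioi (0 : ℝ),
          ν.withDensity f {y | ENNReal.ofReal t < f y} * ENNReal.ofReal (t ^ (p - 1 - 1)) := by
        gcongr 1
        refine setLIntegral_mono' measurableSet_Ioi fun t ht => ?_
        rw [hpow t ht, ← mul_assoc, mul_comm (μ _),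
          withDensity_apply _ (measurableSet_lt measurable_const hf)]
        exact mul_le_mul_left (h t ht) _
    _ = ENNReal.ofReal (p / (p - 1)) * ∫⁻ y, f y ^ (p - 1) ∂ν.withDensity f := by
        rw [lintegral_rpow_eq_lintegral_meas_ofReal_lt hf.aemeasurable hp1, ← mul_assoc,
          ← ENNReal.ofReal_mul (by positivity), div_mul_cancel₀ _ hp1.ne']
    _ = ENNReal.ofReal (p / (p - 1)) * ∫⁻ y, f y ^ p ∂ν := by
        rw [lintegral_withDensity_eq_lintegral_mul ν hf (hf.pow_const _)]
        congr 2 with y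
        simpa using (ENNReal.rpow_add_of_nonneg (x := f y) 1 (p - 1) one_pos.le hp1.le).symm

end LayerCake

/-- `k` belongs to the weak Lebesgue space `L^{r,∞}(μ)`, with the distributional bound
`μ {k > s} ≤ A s^{-r}`. -/
def WeakLpBound {X : Type*} [MeasurableSpace X] (μ : Measure X) (r A : ℝ) (k : X → ℝ≥0∞) : Prop :=
  ∀ s : ℝ, 0 < s → μ {x | ENNReal.ofReal s < k x} ≤ ENNReal.ofReal (A * s ^ (-r))

namespace WeakLpBound

open Set

variable {X : Type*} [MeasurableSpace X] {μ : Measure X} {r A : ℝ} {k : X → ℝ≥0∞}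

lemma setLIntegral_superlevel_le (h : WeakLpBound μ r A k) (hk : Measurable k) (hr : 1 < r)
    {s : ℝ} (hs : 0 < s) :
    ∫⁻ x in {x | ENNReal.ofReal s < k x}, k x ∂μ ≤
      ENNReal.ofReal (A * (r / (r - 1)) * s ^ (1 - r)) := by
  have hr1 : 0 < r - 1 := sub_pos.2 hr
  set E : Set X := {x | ENNReal.ofReal s < k x}
  have low (t : ℝ) : μ.restrict E {x | ENNReal.ofReal t < k x} ≤ ENNReal.ofReal (A * s ^ (-r)) :=
    (measure_mono (subset_univ _)).trans_eq (Measure.restrict_apply_univ E) |>.trans (h s hs)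
  have high (t : ℝ) (ht : s < t) :
      μ.restrict E {x | ENNReal.ofReal t < k x} ≤ ENNReal.ofReal (A * t ^ (-r)) :=
    (Measure.restrict_apply_le _ _).trans (h t (hs.trans ht))
  calc ∫⁻ x in E, k x ∂μ
      = (∫⁻ t in Ioc 0 s, μ.restrict E {x | ENNReal.ofReal t < k x}) +
          ∫⁻ t in Ioi s, μ.restrict E {x | ENNReal.ofReal t < k x} := by
        rw [lintegral_eq_lintegral_meas_ofReal_lt hk.aemeasurable,
          setLIntegral_Ioi_zero_eq_add hs.le]
    _ ≤ (∫⁻ _ in Ioc 0 s, ENNReal.ofReal (A * s ^ (-r))) +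
          ∫⁻ t in Ioi s, ENNReal.ofReal (A * t ^ (-r)) :=
        add_le_add (lintegral_mono fun t => low t) (setLIntegral_mono' measurableSet_Ioi high)
    _ = ENNReal.ofReal A * ENNReal.ofReal (s ^ (-r) * s) +
          ENNReal.ofReal A * ENNReal.ofReal (s ^ (1 - r) / (r - 1)) := by
        congr 1
        · rw [setLIntegral_const, Real.volume_Ioc, sub_zero, ENNReal.ofReal_mul' (by positivity),
            mul_assoc, ENNReal.ofReal_mul' hs.le]
        · calc ∫⁻ t in Ioi s, ENNReal.ofReal (A * t ^ (-r))
              = ∫⁻ t in Ioi s, ENNReal.ofReal A * ENNReal.ofReal (t ^ (-r)) :=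
                setLIntegral_congr_fun measurableSet_Ioi fun t ht =>
                  ENNReal.ofReal_mul' (Real.rpow_nonneg (hs.trans ht).le _)
            _ = ENNReal.ofReal A * ENNReal.ofReal (-s ^ (-r + 1) / (-r + 1)) := by
                rw [lintegral_const_mul _ (by fun_prop), setLIntegral_Ioi_rpow (by linarith) hs]
            _ = _ := by rw [neg_add_eq_sub, ← neg_sub r 1, neg_div_neg_eq]
    _ = ENNReal.ofReal (A * (r / (r - 1)) * s ^ (1 - r)) := by
        rw [← mul_add, ← ENNReal.ofReal_add (by positivity) (by positivity),
          ← ENNReal.ofReal_mul' (by positivity), ← Real.rpow_add_one hs.ne', neg_add_eq_sub]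
        congr 1
        field_simp
        ring

lemma setLIntegral_sublevel_rpow_le (h : WeakLpBound μ r A k) (hk : Measurable k) {p : ℝ}
    (hp : 0 < p) (hrp : r < p) {s : ℝ} (hs : 0 ≤ s) :
    ∫⁻ x in {x | k x ≤ ENNReal.ofReal s}, k x ^ p ∂μ ≤
      ENNReal.ofReal (A * (p / (p - r)) * s ^ (p - r)) := by
  set E : Set X := {x | k x ≤ ENNReal.ofReal s}
  have low (t : ℝ) (ht : t ∈ Ioc 0 s) :
      μ.restrict E {x | ENNReal.ofReal t < k x} * ENNReal.ofReal (t ^ (p - 1)) ≤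
        ENNReal.ofReal A * ENNReal.ofReal (t ^ (p - r - 1)) := by
    have ht0 : 0 < t := ht.1
    calc _ ≤ ENNReal.ofReal (A * t ^ (-r)) * ENNReal.ofReal (t ^ (p - 1)) :=
          mul_le_mul_left ((Measure.restrict_apply_le _ _).trans (h t ht0)) _
      _ = _ := by
          rw [ENNReal.ofReal_mul' (by positivity), mul_assoc, ← ENNReal.ofReal_mul (by positivity),
            ← Real.rpow_add ht0]
          ring_nf
  have high (t : ℝ) (ht : t ∈ Ioi s) :
      μ.restrict E {x | ENNReal.ofReal t < k x} * ENNReal.ofReal (t ^ (p - 1)) = 0 := by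
    have hempty : {x | ENNReal.ofReal t < k x} ∩ E = ∅ :=
      disjoint_iff_inter_eq_empty.1 <| disjoint_left.2 fun x hx hxE =>
        (hx.trans_le hxE).not_ge (ENNReal.ofReal_le_ofReal (le_of_lt ht))
    rw [Measure.restrict_apply (measurableSet_lt measurable_const hk), hempty, measure_empty,
      zero_mul]
  calc ∫⁻ x in E, k x ^ p ∂μ
      = ENNReal.ofReal p * ∫⁻ t in Ioc 0 s,
          μ.restrict E {x | ENNReal.ofReal t < k x} * ENNReal.ofReal (t ^ (p - 1)) := by
        rw [lintegral_rpow_eq_lintegral_meas_ofReal_lt hk.aemeasurable hp,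
          setLIntegral_Ioi_zero_eq_add hs, setLIntegral_congr_fun measurableSet_Ioi high,
          lintegral_zero, add_zero]
    _ ≤ ENNReal.ofReal p * ∫⁻ t in Ioc 0 s,
          ENNReal.ofReal A * ENNReal.ofReal (t ^ (p - r - 1)) :=
        mul_le_mul_right (setLIntegral_mono' measurableSet_Ioc low) _
    _ = ENNReal.ofReal (A * (p / (p - r)) * s ^ (p - r)) := by
        have : 0 < p - r := sub_pos.2 hrp
        rw [lintegral_const_mul _ (by fun_prop), setLIntegral_Ioc_zero_rpow (by linarith) hs,
          sub_add_cancel, mul_left_comm, ← ENNReal.ofReal_mul hp.le,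
          ← ENNReal.ofReal_mul' (by positivity)]
        congr 1
        ring

end WeakLpBound

/-- The integral operator `f ↦ ∫ f(y) K(·, y) dν(y)` with nonnegative kernel `K`. -/
noncomputable def kernelOp {X Y : Type*} [MeasurableSpace Y] (ν : Measure Y)
    (K : X → Y → ℝ≥0∞) (f : Y → ℝ≥0∞) (x : X) : ℝ≥0∞ :=
  ∫⁻ y, f y * K x y ∂ν

/-- The part `K 1_{K > s}` of a kernel where it exceeds the height `s`. -/
noncomputable def upperTrunc {X Y : Type*} (s : ℝ≥0∞) (K : X → Y → ℝ≥0∞) (x : X) (y : Y) : ℝ≥0∞ :=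
  {y | s < K x y}.indicator (K x) y

section KernelOperators

open Function

variable {X Y : Type*} [MeasurableSpace Y] {ν : Measure Y} {K : X → Y → ℝ≥0∞} {f : Y → ℝ≥0∞}

lemma kernelOp_const_mul {c : ℝ≥0∞} (hc : c ≠ ∞) (f : Y → ℝ≥0∞) (x : X) :
    kernelOp ν K (fun y => c * f y) x = c * kernelOp ν K f x := by
  simp only [kernelOp, mul_assoc, lintegral_const_mul' c _ hc]

lemma kernelOp_eq_zero_of_ae_eq_zero (hf : f =ᵐ[ν] 0) : kernelOp ν K f = 0 := by
  funext x
  exact lintegral_eq_zero_of_ae_eq_zero (hf.mono fun y hy => by simp [hy])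

lemma kernelOp_le_add_kernelOp_upperTrunc {x : X} (hK : Measurable (K x)) {s l B : ℝ≥0∞}
    (hB : ∫⁻ y, upperTrunc s K x y ∂ν ≤ B) :
    kernelOp ν K f x ≤ (∫⁻ y in {y | K x y ≤ s}, f y * K x y ∂ν) +
      (l * B + kernelOp ν (upperTrunc s K) ({y | l < f y}.indicator f) x) := by
  have hT : Measurable (upperTrunc s K x) := hK.indicator (measurableSet_lt measurable_const hK)
  have hle (y : Y) : f y ≤ l + {y | l < f y}.indicator f y := by
    by_cases h : l < f y
    · simp [h]
    · exact (not_lt.1 h).trans le_self_add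
  have hsuper : {y | K x y ≤ s}ᶜ = {y | s < K x y} := by ext; simp
  have hnear : ∫⁻ y in {y | s < K x y}, f y * K x y ∂ν = kernelOp ν (upperTrunc s K) f x := by
    rw [← lintegral_indicator (measurableSet_lt measurable_const hK)]
    exact lintegral_congr fun y => Set.indicator_mul_right _ f (K x)
  calc kernelOp ν K f x
      = (∫⁻ y in {y | K x y ≤ s}, f y * K x y ∂ν) + kernelOp ν (upperTrunc s K) f x := by
        rw [← hnear, ← hsuper, lintegral_add_compl _ (measurableSet_le hK measurable_const),
          kernelOp]
    _ ≤ _ := by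
        gcongr
        calc kernelOp ν (upperTrunc s K) f x
            ≤ ∫⁻ y, l * upperTrunc s K x y +
                {y | l < f y}.indicator f y * upperTrunc s K x y ∂ν :=
              lintegral_mono fun y => (mul_le_mul_left (hle y) _).trans_eq (add_mul _ _ _)
          _ = l * ∫⁻ y, upperTrunc s K x y ∂ν +
                kernelOp ν (upperTrunc s K) ({y | l < f y}.indicator f) x := by
              rw [lintegral_add_left (hT.const_mul l), lintegral_const_mul l hT, kernelOp]
          _ ≤ _ := by gcongr

variable [MeasurableSpace X] {μ : Measure X}

lemma measurable_kernelOp [SFinite ν] (hK : Measurable (uncurry K)) (hf : Measurable f) :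
    Measurable (kernelOp ν K f) :=
  ((hf.comp measurable_snd).mul hK).lintegral_prod_right'

lemma lintegral_kernelOp_le [SFinite μ] [SFinite ν] (hK : Measurable (uncurry K))
    (hf : Measurable f) {B : ℝ≥0∞} (hB : ∀ y, ∫⁻ x, K x y ∂μ ≤ B) :
    ∫⁻ x, kernelOp ν K f x ∂μ ≤ B * ∫⁻ y, f y ∂ν :=
  calc ∫⁻ x, kernelOp ν K f x ∂μ = ∫⁻ y, f y * ∫⁻ x, K x y ∂μ ∂ν := by
        unfold kernelOp
        rw [lintegral_lintegral_swap ((hf.comp measurable_snd).mul hK).aemeasurable]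
        exact lintegral_congr fun y => lintegral_const_mul _ hK.of_uncurry_right
    _ ≤ ∫⁻ y, B * f y ∂ν := lintegral_mono fun y => by
        rw [mul_comm B]
        exact mul_le_mul_right (hB y) _
    _ = B * ∫⁻ y, f y ∂ν := lintegral_const_mul _ hf

lemma measurable_uncurry_upperTrunc (hK : Measurable (uncurry K)) (s : ℝ≥0∞) :
    Measurable (uncurry (upperTrunc s K)) :=
  hK.indicator (measurableSet_lt measurable_const hK)

lemma mul_meas_lt_kernelOp_le [SFinite μ] [SFinite ν] (hK : Measurable (uncurry K))
    (hf : Measurable f) {s l B : ℝ≥0∞} (hB₀ : B ≠ 0) (hB : B ≠ ∞)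
    (hν : ∀ x, ∫⁻ y, upperTrunc s K x y ∂ν ≤ B) (hμ : ∀ y, ∫⁻ x, upperTrunc s K x y ∂μ ≤ B)
    (hlow : ∀ x, ∫⁻ y in {y | K x y ≤ s}, f y * K x y ∂ν ≤ l * B) :
    l * μ {x | 3 * (l * B) < kernelOp ν K f x} ≤ ∫⁻ y in {y | l < f y}, f y ∂ν := by
  set g : Y → ℝ≥0∞ := {y | l < f y}.indicator f
  have hfl : MeasurableSet {y | l < f y} := measurableSet_lt measurable_const hf
  have hg : Measurable g := hf.indicator hfl
  have hT := measurable_uncurry_upperTrunc hK s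
  have hsub : {x | 3 * (l * B) < kernelOp ν K f x} ⊆
      {x | l * B ≤ kernelOp ν (upperTrunc s K) g x} := by
    intro x hx
    by_contra hlt
    refine (lt_irrefl (3 * (l * B))) (hx.trans_le ?_)
    calc kernelOp ν K f x ≤ l * B + (l * B + l * B) :=
          (kernelOp_le_add_kernelOp_upperTrunc hK.of_uncurry_left (hν x)).trans
            (add_le_add (hlow x) (add_le_add_right (not_le.1 hlt).le _))
      _ = 3 * (l * B) := by ring
  refine (ENNReal.mul_le_mul_iff_right hB₀ hB).1 ?_
  calc B * (l * μ {x | 3 * (l * B) < kernelOp ν K f x})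
      ≤ l * B * μ {x | l * B ≤ kernelOp ν (upperTrunc s K) g x} := by
        rw [← mul_assoc, mul_comm B]
        gcongr
    _ ≤ ∫⁻ x, kernelOp ν (upperTrunc s K) g x ∂μ :=
        mul_meas_ge_le_lintegral (measurable_kernelOp hT hg) _
    _ ≤ B * ∫⁻ y, g y ∂ν := lintegral_kernelOp_le hT hg hμ
    _ = B * ∫⁻ y in {y | l < f y}, f y ∂ν := by rw [lintegral_indicator hfl]

end KernelOperators

section LpNorm

variable {X : Type*} [MeasurableSpace X] {μ : Measure X} {p : ℝ}

lemma lpNorm_const_mul {c : ℝ≥0∞} (hc : c ≠ ∞) (hp : 0 < p) (h : X → ℝ≥0∞) :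
    lpNorm μ p (fun x => c * h x) = c * lpNorm μ p h := by
  have hpow : c ^ p ≠ ∞ := ENNReal.rpow_ne_top_of_nonneg hp.le hc
  simp only [_root_.lpNorm, ENNReal.mul_rpow_of_nonneg _ _ hp.le, lintegral_const_mul' _ _ hpow]
  rw [ENNReal.mul_rpow_of_nonneg _ _ (by positivity), ← ENNReal.rpow_mul,
    mul_one_div_cancel hp.ne', ENNReal.rpow_one]

lemma lpNorm_le_iff_lintegral_rpow_le {c : ℝ≥0∞} (hp : 0 < p) {h : X → ℝ≥0∞} :
    lpNorm μ p h ≤ c ↔ ∫⁻ x, h x ^ p ∂μ ≤ c ^ p := by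
  rw [_root_.lpNorm, one_div, ENNReal.rpow_inv_le_iff hp]

lemma ae_eq_zero_of_lpNorm_eq_zero (hp : 0 < p) {h : X → ℝ≥0∞} (hh : Measurable h)
    (h0 : lpNorm μ p h = 0) : h =ᵐ[μ] 0 := by
  have hint : ∫⁻ x, h x ^ p ∂μ = 0 := by
    rw [_root_.lpNorm, ENNReal.rpow_eq_zero_iff_of_pos (by positivity)] at h0
    exact h0
  filter_upwards [(lintegral_eq_zero_iff (hh.pow_const p)).1 hint] with x hx
  exact (ENNReal.rpow_eq_zero_iff_of_pos hp).1 hx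

lemma lpNorm_mul_le {p q r : ℝ} (hp : 0 < p) (hpq : p < q) (hpqr : 1 / p = 1 / q + 1 / r)
    {f g : X → ℝ≥0∞} (hf : Measurable f) (hg : Measurable g) :
    lpNorm μ p (fun x => f x * g x) ≤ lpNorm μ q f * lpNorm μ r g :=
  ENNReal.lintegral_Lp_mul_le_Lq_mul_Lr hp hpq hpqr μ hf.aemeasurable hg.aemeasurable

end LpNorm

section WeakYoung

open Function

variable {Y : Type*} [MeasurableSpace Y] {r p q A : ℝ}

lemma exists_setLIntegral_mul_sublevel_le (hr : 1 < r) (hp : 1 < p) (hq : 0 < q)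
    (hpqr : 1 / q = 1 / p + 1 / r - 1) (hA : 0 < A) (ν : Measure Y) :
    ∃ D : ℝ, 0 < D ∧ ∀ {k f : Y → ℝ≥0∞},
      WeakLpBound ν r A k → Measurable k → Measurable f → lpNorm ν p f ≤ 1 → ∀ s : ℝ, 0 < s →
        ∫⁻ y in {y | k y ≤ ENNReal.ofReal s}, f y * k y ∂ν ≤ ENNReal.ofReal (D * s ^ (r / q)) := by
  set p' : ℝ := p.conjExponent
  have hconj : p.HolderConjugate p' := Real.HolderConjugate.conjExponent hp
  have hp' : 0 < p' := hconj.symm.pos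
  have hinv : 1 / p' = 1 - 1 / p := by
    simp only [one_div]
    linarith [hconj.inv_add_inv_eq_one]
  have hexp : (p' - r) * (1 / p') = r / q := by
    rw [div_eq_mul_one_div r q, hpqr, sub_mul, mul_one_div_cancel hp'.ne', hinv]
    field_simp
    ring
  have hrp' : r < p' := by
    have : 0 < (p' - r) * (1 / p') := by rw [hexp]; positivity
    linarith [pos_of_mul_pos_left this (by positivity)]
  set b : ℝ := A * (p' / (p' - r))
  have hb : 0 < b := mul_pos hA (div_pos hp' (sub_pos.2 hrp'))
  refine ⟨b ^ (1 / p'), by positivity, fun {k f} hk hkm hf hfp s hs => ?_⟩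
  have hfE : ∫⁻ y in {y | k y ≤ ENNReal.ofReal s}, f y ^ p ∂ν ≤ 1 :=
    (setLIntegral_le_lintegral _ _).trans <| by
      simpa using (lpNorm_le_iff_lintegral_rpow_le (hconj.pos)).1 hfp
  calc ∫⁻ y in {y | k y ≤ ENNReal.ofReal s}, f y * k y ∂ν
      ≤ (∫⁻ y in {y | k y ≤ ENNReal.ofReal s}, f y ^ p ∂ν) ^ (1 / p) *
          (∫⁻ y in {y | k y ≤ ENNReal.ofReal s}, k y ^ p' ∂ν) ^ (1 / p') :=
        ENNReal.lintegral_mul_le_Lp_mul_Lq _ hconj hf.aemeasurable hkm.aemeasurable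
    _ ≤ 1 ^ (1 / p) * ENNReal.ofReal (b * s ^ (p' - r)) ^ (1 / p') := by
        gcongr
        exact hk.setLIntegral_sublevel_rpow_le hkm hp' hrp' hs.le
    _ = ENNReal.ofReal (b ^ (1 / p') * s ^ (r / q)) := by
        rw [ENNReal.one_rpow, one_mul, ENNReal.ofReal_rpow_of_pos (by positivity),
          Real.mul_rpow hb.le (by positivity), ← Real.rpow_mul hs.le, hexp]

/- At the height `s` the three parts into which `kernelOp_le_add_kernelOp_upperTrunc` splits the
integral are balanced: this forces `t = (D / B) s ^ (r / p)`. -/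
lemma exists_balanced_truncation_height {B D t : ℝ} (hr : r ≠ 0) (hp : p ≠ 0) (hq : q ≠ 0)
    (hpqr : 1 / q = 1 / p + 1 / r - 1) (hB : 0 < B) (hD : 0 < D) (ht : 0 < t) :
    ∃ s : ℝ, 0 < s ∧ t * (B * s ^ (1 - r)) = D * s ^ (r / q) ∧
      D / (B * (3 * D) ^ (q / p)) * (3 * (D * s ^ (r / q))) ^ (q / p) = t := by
  obtain ⟨s, hs, hst⟩ : ∃ s : ℝ, 0 < s ∧ D / B * s ^ (r / p) = t := by
    refine ⟨(t * (B / D)) ^ (p / r), by positivity, ?_⟩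
    rw [← Real.rpow_mul (by positivity), div_mul_div_cancel₀ hr, div_self hp, Real.rpow_one]
    field_simp
  have hexp : r / q = r / p + (1 - r) := by
    rw [div_eq_mul_one_div r q, hpqr]
    field_simp
    ring
  refine ⟨s, hs, ?_, ?_⟩
  · rw [hexp, Real.rpow_add hs, ← hst]
    field_simp
  · rw [← mul_assoc, Real.mul_rpow (x := 3 * D) (y := s ^ (r / q)) (by positivity) (by positivity),
      ← Real.rpow_mul hs.le, div_mul_div_cancel₀ hq, ← hst]
    field_simp

variable {X : Type*} [MeasurableSpace X] {μ : Measure X} {ν : Measure Y} {K : X → Y → ℝ≥0∞}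

lemma lpNorm_kernelOp_le_mul_lpNorm {C : ℝ≥0∞} (hp : 0 < p) (hq : 0 < q) (hC : C ≠ 0)
    (h : ∀ f : Y → ℝ≥0∞, Measurable f → lpNorm ν p f ≤ 1 → lpNorm μ q (kernelOp ν K f) ≤ C)
    {f : Y → ℝ≥0∞} (hf : Measurable f) :
    lpNorm μ q (kernelOp ν K f) ≤ C * lpNorm ν p f := by
  rcases eq_or_ne (lpNorm ν p f) 0 with h0 | h0
  · have hzero : kernelOp ν K f = 0 :=
      kernelOp_eq_zero_of_ae_eq_zero (ae_eq_zero_of_lpNorm_eq_zero hp hf h0)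
    simp [hzero, _root_.lpNorm, hq]
  rcases eq_or_ne (lpNorm ν p f) ∞ with htop | htop
  · simp [htop, hC]
  set N : ℝ≥0∞ := lpNorm ν p f
  have hN : N⁻¹ ≠ ∞ := ENNReal.inv_ne_top.2 h0
  have hnormalized := h (fun y => N⁻¹ * f y) (hf.const_mul _)
    (by rw [lpNorm_const_mul hN hp, ENNReal.inv_mul_cancel h0 htop])
  rw [funext (kernelOp_const_mul hN f), lpNorm_const_mul hN hq] at hnormalized
  rwa [← ENNReal.div_le_iff h0 htop, div_eq_mul_inv, mul_comm]

variable [SFinite μ] [SFinite ν]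

lemma exists_mul_meas_lt_kernelOp_rpow_le (hK : Measurable (uncurry K)) (hr : 1 < r) (hp : 1 < p)
    (hq : 0 < q) (hpqr : 1 / q = 1 / p + 1 / r - 1) (hA : 0 < A)
    (hν : ∀ x, WeakLpBound ν r A (K x)) (hμ : ∀ y, WeakLpBound μ r A fun x => K x y) :
    ∃ c : ℝ, 0 < c ∧ ∀ f : Y → ℝ≥0∞, Measurable f → lpNorm ν p f ≤ 1 → ∀ t : ℝ, 0 < t →
      ENNReal.ofReal t * μ {x | ENNReal.ofReal t < ENNReal.ofReal c * kernelOp ν K f x ^ (q / p)} ≤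
        ∫⁻ y in {y | ENNReal.ofReal t < f y}, f y ∂ν := by
  obtain ⟨D, hD, hfar⟩ := exists_setLIntegral_mul_sublevel_le hr hp hq hpqr hA ν
  have hp₀ : 0 < p := zero_lt_one.trans hp
  have hr₀ : 0 < r := zero_lt_one.trans hr
  set B : ℝ := A * (r / (r - 1))
  have hB : 0 < B := mul_pos hA (div_pos hr₀ (sub_pos.2 hr))
  set c : ℝ := D / (B * (3 * D) ^ (q / p))
  have hc : 0 < c := by positivity
  refine ⟨c, hc, fun f hf hfp t ht => ?_⟩
  obtain ⟨s, hs, hbalance, hlevel⟩ :=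
    exists_balanced_truncation_height hr₀.ne' hp₀.ne' hq.ne' hpqr hB hD ht
  set b : ℝ≥0∞ := ENNReal.ofReal (B * s ^ (1 - r))
  have hb : ENNReal.ofReal t * b = ENNReal.ofReal (D * s ^ (r / q)) := by
    rw [← ENNReal.ofReal_mul ht.le, hbalance]
  have ht_eq : ENNReal.ofReal t =
      ENNReal.ofReal c * (3 * (ENNReal.ofReal t * b)) ^ (q / p) := by
    rw [hb, ← ENNReal.ofReal_ofNat 3, ← ENNReal.ofReal_mul (by norm_num),
      ENNReal.ofReal_rpow_of_pos (by positivity), ← ENNReal.ofReal_mul hc.le, hlevel]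
  have hset : {x | ENNReal.ofReal t < ENNReal.ofReal c * kernelOp ν K f x ^ (q / p)} =
      {x | 3 * (ENNReal.ofReal t * b) < kernelOp ν K f x} := by
    ext x
    change ENNReal.ofReal t < _ ↔ 3 * (ENNReal.ofReal t * b) < _
    conv_lhs => rw [ht_eq]
    rw [ENNReal.mul_lt_mul_iff_right (ENNReal.ofReal_pos.2 hc).ne' ENNReal.ofReal_ne_top,
      ENNReal.rpow_lt_rpow_iff (by positivity)]
  rw [hset]
  refine mul_meas_lt_kernelOp_le hK hf (s := ENNReal.ofReal s)
    (ENNReal.ofReal_pos.2 (by positivity)).ne' ENNReal.ofReal_ne_top (fun x => ?_) (fun y => ?_)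
    fun x => hb ▸ hfar (hν x) hK.of_uncurry_left hf hfp s hs
  · exact (lintegral_indicator (measurableSet_lt measurable_const hK.of_uncurry_left) _).trans_le
      ((hν x).setLIntegral_superlevel_le hK.of_uncurry_left hr hs)
  · exact (lintegral_indicator (measurableSet_lt measurable_const hK.of_uncurry_right) _).trans_le
      ((hμ y).setLIntegral_superlevel_le hK.of_uncurry_right hr hs)

lemma exists_lpNorm_kernelOp_le_of_lpNorm_le_one (hK : Measurable (uncurry K)) (hr : 1 < r)
    (hp : 1 < p) (hq : 0 < q) (hpqr : 1 / q = 1 / p + 1 / r - 1) (hA : 0 < A)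
    (hν : ∀ x, WeakLpBound ν r A (K x)) (hμ : ∀ y, WeakLpBound μ r A fun x => K x y) :
    ∃ C : ℝ, 0 < C ∧ ∀ f : Y → ℝ≥0∞, Measurable f → lpNorm ν p f ≤ 1 →
      lpNorm μ q (kernelOp ν K f) ≤ ENNReal.ofReal C := by
  obtain ⟨c, hc, hlevel⟩ := exists_mul_meas_lt_kernelOp_rpow_le hK hr hp hq hpqr hA hν hμ
  have hp₀ : 0 < p := zero_lt_one.trans hp
  set M : ℝ := p / (p - 1)
  have : 0 < M := div_pos hp₀ (sub_pos.2 hp)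
  refine ⟨(M / c ^ p) ^ (1 / q), by positivity, fun f hf hfp => ?_⟩
  have hF : Measurable (kernelOp ν K f) := measurable_kernelOp hK hf
  have hpow (x : X) : (ENNReal.ofReal c * kernelOp ν K f x ^ (q / p)) ^ p =
      ENNReal.ofReal (c ^ p) * kernelOp ν K f x ^ q := by
    rw [ENNReal.mul_rpow_of_nonneg _ _ hp₀.le, ENNReal.ofReal_rpow_of_pos hc, ← ENNReal.rpow_mul,
      div_mul_cancel₀ _ hp₀.ne']
  have hbound : ENNReal.ofReal (c ^ p) * ∫⁻ x, kernelOp ν K f x ^ q ∂μ ≤ ENNReal.ofReal M :=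
    calc ENNReal.ofReal (c ^ p) * ∫⁻ x, kernelOp ν K f x ^ q ∂μ
        = ∫⁻ x, (ENNReal.ofReal c * kernelOp ν K f x ^ (q / p)) ^ p ∂μ := by
          rw [lintegral_congr hpow, lintegral_const_mul _ (hF.pow_const q)]
      _ ≤ ENNReal.ofReal M * ∫⁻ y, f y ^ p ∂ν :=
          lintegral_rpow_le_of_mul_meas_lt_le ((hF.pow_const _).const_mul _).aemeasurable hf hp
            (hlevel f hf hfp)
      _ ≤ ENNReal.ofReal M * 1 := by
          gcongr
          simpa using (lpNorm_le_iff_lintegral_rpow_le hp₀).1 hfp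
      _ = ENNReal.ofReal M := mul_one _
  rw [lpNorm_le_iff_lintegral_rpow_le hq, ENNReal.ofReal_rpow_of_pos (by positivity),
    ← Real.rpow_mul (by positivity), one_div_mul_cancel hq.ne', Real.rpow_one,
    ENNReal.ofReal_div_of_pos (by positivity)]
  rwa [ENNReal.le_div_iff_mul_le (Or.inl (ENNReal.ofReal_pos.2 (by positivity)).ne')
    (Or.inl ENNReal.ofReal_ne_top), mul_comm]

theorem exists_lpNorm_kernelOp_le (hK : Measurable (uncurry K)) (hr : 1 < r) (hp : 1 < p)
    (hq : 0 < q) (hpqr : 1 / q = 1 / p + 1 / r - 1) (hA : 0 < A)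
    (hν : ∀ x, WeakLpBound ν r A (K x)) (hμ : ∀ y, WeakLpBound μ r A fun x => K x y) :
    ∃ C : ℝ, 0 < C ∧ ∀ f : Y → ℝ≥0∞, Measurable f →
      lpNorm μ q (kernelOp ν K f) ≤ ENNReal.ofReal C * lpNorm ν p f := by
  obtain ⟨C, hC, h⟩ := exists_lpNorm_kernelOp_le_of_lpNorm_le_one hK hr hp hq hpqr hA hν hμ
  exact ⟨C, hC, fun f hf => lpNorm_kernelOp_le_mul_lpNorm (zero_lt_one.trans hp) hq
    (ENNReal.ofReal_pos.2 hC).ne' h hf⟩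

end WeakYoung

/-- The upper half of `η`-Ahlfors regularity: balls of radius `r` have measure at most `A r ^ η`. -/
def IsUpperAhlfors {X : Type*} [MeasurableSpace X] (d : X → X → ℝ) (μ : Measure X)
    (η A : ℝ) : Prop :=
  ∀ x : X, ∀ r : ℝ, 0 < r → μ {y | d x y < r} ≤ ENNReal.ofReal (A * r ^ η)

section FractionalIntegral

variable {X : Type*} [MeasurableSpace X] {d : X → X → ℝ} {μ : Measure X} {β η A : ℝ}

lemma IsAhlfors.isUpperAhlfors {a : ℝ} (h : IsAhlfors d μ η a A) : IsUpperAhlfors d μ η A :=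
  fun x r hr => (h x r hr).2

lemma IsUpperAhlfors.sigmaFinite (h : IsUpperAhlfors d μ η A) : SigmaFinite μ := by
  rcases isEmpty_or_nonempty X with hX | ⟨⟨x₀⟩⟩
  · rw [Measure.eq_zero_of_isEmpty μ]
    infer_instance
  · refine ⟨⟨⟨fun n : ℕ => {y | d x₀ y < n + 1}, fun _ => trivial,
      fun n => (h x₀ (n + 1) (by positivity)).trans_lt ENNReal.ofReal_lt_top, ?_⟩⟩⟩
    refine Set.iUnion_eq_univ_iff.2 fun y => ?_
    obtain ⟨n, hn⟩ := exists_nat_gt (d x₀ y)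
    exact ⟨n, hn.trans (lt_add_one _)⟩

lemma measurable_uncurry_rieszKernel (hd : Measurable fun p : X × X => d p.1 p.2) (a : ℝ) :
    Measurable (Function.uncurry fun x y => ENNReal.ofReal (d x y) ^ a) :=
  hd.ennreal_ofReal.pow_const a

lemma IsUpperAhlfors.weakLpBound_rieszKernel (h : IsUpperAhlfors d μ η A) (hβ : β < η) (x : X) :
    WeakLpBound μ (η / (η - β)) A fun y => ENNReal.ofReal (d x y) ^ (β - η) := by
  intro s hs
  have hηβ : 0 < η - β := sub_pos.2 hβ
  have hball : {y | ENNReal.ofReal s < ENNReal.ofReal (d x y) ^ (β - η)} =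
      {y | d x y < s ^ (-(η - β)⁻¹)} := by
    ext y
    calc ENNReal.ofReal s < ENNReal.ofReal (d x y) ^ (β - η)
        ↔ ENNReal.ofReal (d x y) ^ (η - β) < (ENNReal.ofReal s)⁻¹ := by
          rw [← neg_sub η β, ENNReal.rpow_neg, ENNReal.lt_inv_iff_lt_inv]
      _ ↔ ENNReal.ofReal (d x y) < (ENNReal.ofReal s)⁻¹ ^ (η - β)⁻¹ :=
          (ENNReal.lt_rpow_inv_iff hηβ).symm
      _ ↔ ENNReal.ofReal (d x y) < ENNReal.ofReal (s ^ (-(η - β)⁻¹)) := by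
          rw [← ENNReal.ofReal_rpow_of_pos hs, ENNReal.rpow_neg, ENNReal.inv_rpow]
      _ ↔ d x y < s ^ (-(η - β)⁻¹) := ENNReal.ofReal_lt_ofReal_iff (by positivity)
  have hpow : (s ^ (-(η - β)⁻¹)) ^ η = s ^ (-(η / (η - β))) := by
    rw [← Real.rpow_mul hs.le]
    ring_nf
  rw [hball, ← hpow]
  exact h x _ (by positivity)

lemma measurable_fracInt [SFinite μ] (hd : Measurable fun p : X × X => d p.1 p.2)
    {f : X → ℝ≥0∞} (hf : Measurable f) : Measurable (fracInt d μ β η f) :=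
  measurable_kernelOp (measurable_uncurry_rieszKernel hd (β - η)) hf

theorem exists_lpNorm_fracInt_le (hd : Measurable fun p : X × X => d p.1 p.2)
    (hsymm : ∀ x y, d x y = d y x) (hA : 0 < A) (hμ : IsUpperAhlfors d μ η A)
    (hβ₀ : 0 < β) (hβη : β < η) {p q : ℝ} (hp : 1 < p) (hq : 0 < q)
    (hpq : 1 / q = 1 / p - β / η) :
    ∃ C : ℝ, 0 < C ∧ ∀ f : X → ℝ≥0∞, Measurable f →
      lpNorm μ q (fracInt d μ β η f) ≤ ENNReal.ofReal C * lpNorm μ p f := by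
  have hη : 0 < η := hβ₀.trans hβη
  have := hμ.sigmaFinite
  have hweak := hμ.weakLpBound_rieszKernel hβη
  refine exists_lpNorm_kernelOp_le (measurable_uncurry_rieszKernel hd (β - η))
    ((one_lt_div (sub_pos.2 hβη)).2 (by linarith)) hp hq ?_ hA hweak fun y => ?_
  · rw [hpq, one_div_div, sub_div, div_self hη.ne']
    ring
  · simpa only [hsymm] using hweak y

end FractionalIntegral

theorem statement2_general {X : Type*} [MeasurableSpace X] {d : X → X → ℝ}
    (hsymm : ∀ x y, d x y = d y x) (hd : Measurable fun p : X × X => d p.1 p.2)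
    {μ : Measure X} {η A : ℝ} (hA : 0 < A) (hμ : IsUpperAhlfors d μ η A)
    {β₁ β₂ : ℝ} (hβ₁ : 0 < β₁) (hβ₁η : β₁ < η) (hβ₂ : 0 < β₂) (hβ₂η : β₂ < η)
    {p₁ p₂ p₃ : ℝ} (hp₁ : 0 < 1 / p₁) (hp₂l : β₂ / η < 1 / p₂) (hp₂u : 1 / p₂ < 1)
    (hsum_l : β₁ / η + β₂ / η < 1 / p₁ + 1 / p₂) (hsum_u : 1 / p₁ + 1 / p₂ < 1 + β₂ / η)
    (hp₃ : 1 / p₃ = 1 / p₁ + 1 / p₂ - (β₁ / η + β₂ / η)) :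
    ∃ C : ℝ, 0 < C ∧ ∀ f g : X → ℝ≥0∞, Measurable f → Measurable g →
      lpNorm μ p₃ (fracInt d μ β₁ η (fun x => f x * fracInt d μ β₂ η g x)) ≤
        ENNReal.ofReal C * lpNorm μ p₁ f * lpNorm μ p₂ g := by
  have := hμ.sigmaFinite
  have hβ₂η₀ : 0 < β₂ / η := div_pos hβ₂ (hβ₂.trans hβ₂η)
  have hp₂ : 1 < p₂ := (div_lt_one (one_div_pos.1 (by linarith))).1 hp₂u
  obtain ⟨q, hq⟩ : ∃ q : ℝ, 1 / q = 1 / p₂ - β₂ / η := ⟨_, one_div_one_div _⟩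
  obtain ⟨r, hr⟩ : ∃ r : ℝ, 1 / r = 1 / p₁ + 1 / q := ⟨_, one_div_one_div _⟩
  have hq₀ : 0 < q := one_div_pos.1 (by linarith)
  have hr₀ : 0 < r := one_div_pos.1 (by linarith)
  have hr₁ : 1 < r := (div_lt_one hr₀).1 (by linarith)
  have hrp₁ : r < p₁ := (one_div_lt_one_div (one_div_pos.1 hp₁) hr₀).1 (by linarith)
  obtain ⟨C₁, hC₁, inner⟩ := exists_lpNorm_fracInt_le hd hsymm hA hμ hβ₂ hβ₂η hp₂ hq₀ hq
  obtain ⟨C₂, hC₂, outer⟩ := exists_lpNorm_fracInt_le hd hsymm hA hμ hβ₁ hβ₁η hr₁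
    (one_div_pos.1 (by linarith)) (show 1 / p₃ = 1 / r - β₁ / η by linarith)
  refine ⟨C₂ * C₁, by positivity, fun f g hf hg => ?_⟩
  have hIg : Measurable (fracInt d μ β₂ η g) := measurable_fracInt hd hg
  calc lpNorm μ p₃ (fracInt d μ β₁ η (fun x => f x * fracInt d μ β₂ η g x))
      ≤ ENNReal.ofReal C₂ * lpNorm μ r (fun x => f x * fracInt d μ β₂ η g x) :=
        outer _ (hf.mul hIg)
    _ ≤ ENNReal.ofReal C₂ * (lpNorm μ p₁ f * lpNorm μ q (fracInt d μ β₂ η g)) := by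
        gcongr
        exact lpNorm_mul_le hr₀ hrp₁ hr hf hIg
    _ ≤ ENNReal.ofReal C₂ * (lpNorm μ p₁ f * (ENNReal.ofReal C₁ * lpNorm μ p₂ g)) := by
        gcongr
        exact inner g hg
    _ = ENNReal.ofReal (C₂ * C₁) * lpNorm μ p₁ f * lpNorm μ p₂ g := by
        rw [ENNReal.ofReal_mul hC₂.le]
        ring

/-- Case `B_σ`: `‖I_{η-γ/2}(f · I_{η-γ/2}g)‖_{p₃} ≤ C ‖f‖_{p₁} ‖g‖_{p₂}` when
`0 < 1/p₁ < 1`, `σ < 1/p₂ < 1`, `2σ < 1/p₁ + 1/p₂ < 1 + σ` and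
`1/p₃ = 1/p₁ + 1/p₂ - 2σ`, with `σ = (2η-γ)/(2η)`. -/
theorem statement2 {X : Type*} [MeasurableSpace X]
    (d : X → X → ℝ) (κ : ℝ) (hκ : 1 ≤ κ) (hqm : IsQuasiMetric d κ)
    (hd_meas : Measurable fun p : X × X => d p.1 p.2)
    (μ : Measure X) (η : ℝ) (hη : 0 < η)
    (a A : ℝ) (ha : 0 < a) (haA : a ≤ A) (hAhl : IsAhlfors d μ η a A)
    (γ : ℝ) (hγ0 : 0 < γ) (hγ2η : γ < 2 * η)
    (σ : ℝ) (hσ : σ = (2 * η - γ) / (2 * η))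
    (p₁ p₂ p₃ : ℝ)
    (hp₁l : 0 < 1 / p₁) (hp₁u : 1 / p₁ < 1)
    (hp₂l : σ < 1 / p₂) (hp₂u : 1 / p₂ < 1)
    (hsum_l : 2 * σ < 1 / p₁ + 1 / p₂) (hsum_u : 1 / p₁ + 1 / p₂ < 1 + σ)
    (hp₃ : 1 / p₃ = 1 / p₁ + 1 / p₂ - 2 * σ) :
    ∃ C : ℝ, 0 < C ∧ ∀ f g : X → ℝ≥0∞, Measurable f → Measurable g →
      lpNorm μ p₁ f ≠ ⊤ → lpNorm μ p₂ g ≠ ⊤ →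
      lpNorm μ p₃
          (fracInt d μ (η - γ / 2) η
            (fun x => f x * fracInt d μ (η - γ / 2) η g x)) ≤
        ENNReal.ofReal C * lpNorm μ p₁ f * lpNorm μ p₂ g := by
  have hσβ : (η - γ / 2) / η = σ := by rw [hσ]; field_simp
  obtain ⟨C, hC, h⟩ := statement2_general (p₃ := p₃) (β₁ := η - γ / 2) (β₂ := η - γ / 2) hqm.2.2.1
    hd_meas (ha.trans_le haA) hAhl.isUpperAhlfors (by linarith) (by linarith) (by linarith)
    (by linarith) hp₁l (by linarith) hp₂u (by linarith) (by linarith) (by linarith)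
  exact ⟨C, hC, fun f g hf hg _ _ => h f g hf hg⟩
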